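/- A K-superalgebra A over a field K of characteristic 0 is split semisimple if and only if A is isomorphic, as a superalgebra, to a finite direct sum of superalgebras each of the form M_{m|n}(K) (full matrix superalgebra with m even and n odd indices) or Q_t(K) (the queer superalgebra: M_t(K) ⊕ M_t(K) with swap involution), with m+n > 0 and t > 0. Moreover, in this case every irreducible module over the underlying algebra |A| is a direct summand of the restriction of some irreducible A-supermodule. -/

import Mathlib

/-- A superalgebra structure on an `O`-algebra `A`: since `2` is invertible in all our base
rings, a `ℤ/2`-grading is the same datum as an `O`-algebra involution `σ` (even part the fixed
points, odd part the anti-fixed points). -/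
structure SuperAlg (O : Type) [CommRing O] (A : Type) [Ring A] [Algebra O A] where
  σ : A ≃ₐ[O] A
  invol : ∀ a, σ (σ a) = a

namespace SuperAlg

variable {O : Type} [CommRing O] {A : Type} [Ring A] [Algebra O A]

/-- An element is even if it is fixed by the sign automorphism. -/
def IsEven (sA : SuperAlg O A) (a : A) : Prop := sA.σ a = a

/-- An element is odd if it is negated by the sign automorphism. -/
def IsOdd (sA : SuperAlg O A) (a : A) : Prop := sA.σ a = -a

/-- The even part `A₀` of a superalgebra, as a subalgebra. -/
def evenPart (sA : SuperAlg O A) : Subalgebra O A where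
  carrier := {a | sA.σ a = a}
  add_mem' := by intro a b ha hb; simp only [Set.mem_setOf_eq] at *; rw [map_add, ha, hb]
  mul_mem' := by intro a b ha hb; simp only [Set.mem_setOf_eq] at *; rw [map_mul, ha, hb]
  algebraMap_mem' := by intro r; simp

/-- A superunit: an invertible odd element. -/
def IsSuperUnit (sA : SuperAlg O A) (u : A) : Prop := IsUnit u ∧ sA.σ u = -u

end SuperAlg

/-- A supermodule structure on a module `M` over a superalgebra `(A, σ)`: an `O`-linear
involution compatible with the sign automorphism of `A`. -/
structure SuperMod {O : Type} [CommRing O] {A : Type} [Ring A] [Algebra O A]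
    (sA : SuperAlg O A) (M : Type) [AddCommGroup M] [Module O M] [Module A M]
    [IsScalarTower O A M] where
  σ : M ≃ₗ[O] M
  invol : ∀ m, σ (σ m) = m
  compat : ∀ (a : A) (m : M), σ (a • m) = sA.σ a • σ m

namespace SuperMod

variable {O : Type} [CommRing O] {A : Type} [Ring A] [Algebra O A] {sA : SuperAlg O A}
variable {M : Type} [AddCommGroup M] [Module O M] [Module A M] [IsScalarTower O A M]

/-- The even part `M₀` of a supermodule, as a module over the even part `A₀`. -/
def evenSub (sM : SuperMod sA M) : Submodule ↥sA.evenPart M where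
  carrier := {m | sM.σ m = m}
  add_mem' := by intro a b ha hb; simp only [Set.mem_setOf_eq] at *; rw [map_add, ha, hb]
  zero_mem' := by simp
  smul_mem' := by
    intro c m hm
    simp only [Set.mem_setOf_eq] at *
    have : (c : A) • m = c • m := rfl
    rw [← this, sM.compat, c.2, hm]

end SuperMod

/-- A module is indecomposable: nonzero, and not the direct sum of two nonzero submodules. -/
def ModIndecomposable (R : Type) [Ring R] (M : Type) [AddCommGroup M] [Module R M] : Prop :=
  (∃ m : M, m ≠ 0) ∧
  ∀ p q : Submodule R M, IsCompl p q → p = ⊥ ∨ q = ⊥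

section SplitSS

variable {K : Type} [Field K] {A : Type} [Ring A] [Algebra K A]

/-- An irreducible supermodule: nonzero, with no nontrivial `σ`-invariant submodule. -/
def IrreducibleSuperMod (sA : SuperAlg K A) {V : Type} [AddCommGroup V] [Module K V]
    [Module A V] [IsScalarTower K A V] (sV : SuperMod sA V) : Prop :=
  (∃ v : V, v ≠ 0) ∧
  ∀ p : Submodule A V, (∀ v ∈ p, sV.σ v ∈ p) → p = ⊥ ∨ p = ⊤

/-- A superalgebra over `K` is split if the (super)endomorphism algebra of every irreducible
supermodule of type `M` is one-dimensional and that of every irreducible supermodule of type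
`Q` is two-dimensional. -/
def SuperSplit (sA : SuperAlg K A) : Prop :=
  ∀ (V : Type) [AddCommGroup V] [Module K V] [Module A V] [IsScalarTower K A V]
    (sV : SuperMod sA V), IrreducibleSuperMod sA sV →
    (IsSimpleModule A V → ∀ f : Module.End A V, ∃ c : K, ∀ v, f v = c • v) ∧
    (¬ IsSimpleModule A V →
      ∃ g : Module.End A V, (¬ ∃ c : K, ∀ v, g v = c • v) ∧
        ∀ f : Module.End A V, ∃ c d : K, ∀ v, f v = c • v + d • g v)

/-- A superalgebra over `K` is semisimple if every supermodule is a direct sum of irreducible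
supermodules; equivalently, every `σ`-invariant submodule of a supermodule has a
`σ`-invariant complement. -/
def SuperSemisimple (sA : SuperAlg K A) : Prop :=
  ∀ (V : Type) [AddCommGroup V] [Module K V] [Module A V] [IsScalarTower K A V]
    (sV : SuperMod sA V) (p : Submodule A V), (∀ v ∈ p, sV.σ v ∈ p) →
    ∃ q : Submodule A V, (∀ v ∈ q, sV.σ v ∈ q) ∧ IsCompl p q

end SplitSS

/-- The direct sum of matrix superalgebras `M_{m i|n i}(K)` and queer superalgebras
`Q_{t j}(K)` (the latter realized as `M_{t j}(K) ⊕ M_{t j}(K)` with the swap involution). -/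
def MsqAlg (K : Type) [Field K] (k₁ k₂ : ℕ) (m n : Fin k₁ → ℕ) (t : Fin k₂ → ℕ) : Type :=
  (∀ i : Fin k₁, Matrix (Fin (m i + n i)) (Fin (m i + n i)) K) ×
  (∀ j : Fin k₂, Matrix (Fin (t j)) (Fin (t j)) K × Matrix (Fin (t j)) (Fin (t j)) K)

instance (K : Type) [Field K] (k₁ k₂ : ℕ) (m n : Fin k₁ → ℕ) (t : Fin k₂ → ℕ) :
    Ring (MsqAlg K k₁ k₂ m n t) :=
  inferInstanceAs (Ring (_ × _))

instance (K : Type) [Field K] (k₁ k₂ : ℕ) (m n : Fin k₁ → ℕ) (t : Fin k₂ → ℕ) :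
    Algebra K (MsqAlg K k₁ k₂ m n t) :=
  inferInstanceAs (Algebra K (_ × _))

/-- The block sign `±1` of an index of `Fin (m + n)`: `+1` on the first `m` (even) indices and
`-1` on the last `n` (odd) indices. -/
def matEps (K : Type) [Field K] (m : ℕ) {N : ℕ} (a : Fin N) : K :=
  if (a : ℕ) < m then 1 else -1

/-- The sign involution of the superalgebra `⨁ M_{m i|n i}(K) ⊕ ⨁ Q_{t j}(K)`: conjugation by
`diag(1_m, -1_n)` on matrix factors, and the swap on queer factors. -/
def msqInvol (K : Type) [Field K] (k₁ k₂ : ℕ) (m n : Fin k₁ → ℕ) (t : Fin k₂ → ℕ) :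
    MsqAlg K k₁ k₂ m n t → MsqAlg K k₁ k₂ m n t :=
  fun x =>
    (fun i => Matrix.of fun a b => (matEps K (m i) a * matEps K (m i) b) • x.1 i a b,
     fun j => ((x.2 j).2, (x.2 j).1))

namespace SuperProof

section Basic

variable {K : Type} [Field K] {A : Type} [Ring A] [Algebra K A] {sA : SuperAlg K A}
variable {V : Type} [AddCommGroup V] [Module K V] [Module A V] [IsScalarTower K A V]

/-- The restriction of a supermodule structure to an invariant submodule. -/
def superSub (sV : SuperMod sA V) (p : Submodule A V) (hp : ∀ v ∈ p, sV.σ v ∈ p) :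
    SuperMod sA p where
  σ :=
    { toFun := fun v => ⟨sV.σ v.1, hp v.1 v.2⟩
      invFun := fun v => ⟨sV.σ v.1, hp v.1 v.2⟩
      left_inv := fun v => Subtype.ext (sV.invol v.1)
      right_inv := fun v => Subtype.ext (sV.invol v.1)
      map_add' := fun v w => Subtype.ext (by simp)
      map_smul' := fun c v => Subtype.ext (by simp) }
  invol := fun v => Subtype.ext (sV.invol v.1)
  compat := fun a v => Subtype.ext (sV.compat a v.1)

theorem superSub_coe (sV : SuperMod sA V) (p : Submodule A V) (hp : ∀ v ∈ p, sV.σ v ∈ p)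
    (v : p) : ((superSub sV p hp).σ v : V) = sV.σ v.1 := rfl

/-- The regular supermodule. -/
def regular (sA : SuperAlg K A) : SuperMod sA A where
  σ := sA.σ.toLinearEquiv
  invol := sA.invol
  compat := fun a m => by simp

theorem regular_apply (sA : SuperAlg K A) (a : A) : (regular sA).σ a = sA.σ a := rfl

/-- The image of a submodule under the sign involution. -/
def twist (sV : SuperMod sA V) (p : Submodule A V) : Submodule A V where
  carrier := {v | sV.σ v ∈ p}
  add_mem' := by
    intro a b ha hb
    simp only [Set.mem_setOf_eq] at *
    rw [map_add]; exact p.add_mem ha hb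
  zero_mem' := by simp
  smul_mem' := by
    intro c m hm
    simp only [Set.mem_setOf_eq] at *
    rw [sV.compat]; exact p.smul_mem _ hm

theorem mem_twist (sV : SuperMod sA V) (p : Submodule A V) (v : V) :
    v ∈ twist sV p ↔ sV.σ v ∈ p := Iff.rfl

theorem sigma_mem_twist (sV : SuperMod sA V) (p : Submodule A V) {v : V} (h : v ∈ p) :
    sV.σ v ∈ twist sV p := by
  rw [mem_twist, sV.invol]; exact h

theorem sup_twist_inv (sV : SuperMod sA V) (p : Submodule A V) :
    ∀ v ∈ p ⊔ twist sV p, sV.σ v ∈ p ⊔ twist sV p := by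
  intro v hv
  obtain ⟨x, hx, y, hy, rfl⟩ := Submodule.mem_sup.1 hv
  rw [map_add, add_comm]
  exact Submodule.add_mem_sup hy (sigma_mem_twist sV p hx)

theorem inf_twist_inv (sV : SuperMod sA V) (p : Submodule A V) :
    ∀ v ∈ p ⊓ twist sV p, sV.σ v ∈ p ⊓ twist sV p := by
  rintro v ⟨h1, h2⟩
  exact ⟨h2, sigma_mem_twist sV p h1⟩

/-- Conjugation of an endomorphism by the sign involution. -/
def conj (sV : SuperMod sA V) (f : Module.End A V) : Module.End A V where
  toFun := fun v => sV.σ (f (sV.σ v))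
  map_add' := by intro x y; simp
  map_smul' := by
    intro a x
    simp [sV.compat, sA.invol]

theorem conj_apply (sV : SuperMod sA V) (f : Module.End A V) (v : V) :
    conj sV f v = sV.σ (f (sV.σ v)) := rfl

theorem semisimpleRing_of_super [FiniteDimensional K A] (h : SuperSemisimple sA) :
    IsSemisimpleRing A := by
  have : IsArtinianRing A := IsArtinianRing.of_finite K A
  rw [IsArtinianRing.isSemisimpleRing_iff_jacobson]
  have hinv : ∀ v ∈ Ring.jacobson A, (regular sA).σ v ∈ Ring.jacobson A := by
    intro v hv
    have : RingHomSurjective (sA.σ : A →+* A) := ⟨sA.σ.surjective⟩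
    exact Ring.map_jacobson_le (sA.σ : A →+* A) ⟨v, hv, rfl⟩
  obtain ⟨q, -, hq⟩ := h A (regular sA) (Ring.jacobson A) hinv
  by_cases hqt : q = ⊤
  · subst hqt
    simpa using hq.inf_eq_bot
  · obtain ⟨M, hM, hqM⟩ := Ideal.exists_le_maximal q hqt
    exfalso
    apply hM.ne_top
    rw [eq_top_iff, ← hq.sup_eq_top]
    refine sup_le ?_ hqM
    rw [Ring.jacobson_eq_sInf_isMaximal]
    exact sInf_le hM

/-- Averaging: a superalgebra over a semisimple ring is semisimple. -/
theorem super_of_semisimpleRing [CharZero K] [IsSemisimpleRing A] (sA : SuperAlg K A) :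
    SuperSemisimple sA := by
  intro V _ _ _ _ sV p hp
  obtain ⟨q, hq⟩ := exists_isCompl p
  let π : Module.End A V := Submodule.projection p q hq
  have hπ1 : ∀ v, π v ∈ p := fun v => by
    simp only [π]; exact Submodule.projection_apply_mem hq v
  have hπ2 : ∀ v ∈ p, π v = v := fun v hv => by
    exact Submodule.projection_apply_left hq ⟨v, hv⟩
  let τ : Module.End A V := π + conj sV π
  have hτ1 : ∀ v, τ v ∈ p := fun v => p.add_mem (hπ1 v) (hp _ (hπ1 _))
  have hτ2 : ∀ v ∈ p, τ v = (2 : K) • v := fun v hv => by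
    simp only [τ, LinearMap.add_apply, conj_apply]
    rw [hπ2 v hv, hπ2 _ (hp v hv), sV.invol, two_smul]
  have hτ3 : ∀ v, τ (sV.σ v) = sV.σ (τ v) := fun v => by
    simp only [τ, LinearMap.add_apply, conj_apply, map_add, sV.invol]
    rw [add_comm]
  refine ⟨LinearMap.ker τ, ?_, ?_⟩
  · intro v hv
    rw [LinearMap.mem_ker] at *
    rw [hτ3, hv, map_zero]
  · have h2 : (2 : K) ≠ 0 := two_ne_zero
    constructor
    · rw [Submodule.disjoint_def]
      intro v hv hv'
      rw [LinearMap.mem_ker, hτ2 v hv] at hv'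
      exact (smul_eq_zero.1 hv').resolve_left h2
    · rw [codisjoint_iff, eq_top_iff]
      intro v _
      have hm : (2⁻¹ : K) • τ v ∈ p := by
        rw [← algebraMap_smul A]; exact p.smul_mem _ (hτ1 v)
      refine Submodule.mem_sup.2 ⟨(2⁻¹ : K) • τ v, hm, v - (2⁻¹ : K) • τ v, ?_, by abel⟩
      rw [LinearMap.mem_ker, map_sub, hτ2 _ hm, smul_smul, mul_inv_cancel₀ h2, one_smul, sub_self]

/-- Every simple module is a direct summand of an irreducible super left ideal. -/
theorem exists_summand [FiniteDimensional K A] (h : SuperSemisimple sA)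
    (W : Type*) [AddCommGroup W] [Module A W] [IsSimpleModule A W] :
    ∃ (U : Submodule A A) (hU : ∀ v ∈ U, (regular sA).σ v ∈ U),
      IrreducibleSuperMod sA (superSub (regular sA) U hU) ∧
      ∃ (ι : W →ₗ[A] U) (r : U →ₗ[A] W), ∀ w, r (ι w) = w := by
  have hss := semisimpleRing_of_super h
  have : IsArtinianRing A := IsArtinianRing.of_finite K A
  have hn := IsSimpleModule.nontrivial A W
  obtain ⟨w₀, hw₀⟩ := exists_ne (0 : W)
  let f : A →ₗ[A] W := LinearMap.toSpanSingleton A W w₀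
  let S : Set (Submodule A A) :=
    {U | (∀ v ∈ U, (regular sA).σ v ∈ U) ∧ ∃ u ∈ U, f u ≠ 0}
  have hS : S.Nonempty := ⟨⊤, fun _ _ => trivial, 1, trivial, by simpa [f] using hw₀⟩
  obtain ⟨U, ⟨hU, u, huU, hu⟩, hmin⟩ :=
    WellFounded.has_min (wellFounded_lt (α := Submodule A A)) S hS
  have hr0 : f ∘ₗ U.subtype ≠ 0 := fun h0 => hu (by
    simpa using LinearMap.congr_fun h0 ⟨u, huU⟩)
  refine ⟨U, hU, ⟨⟨⟨u, huU⟩, fun h0 => hu ?_⟩, ?_⟩, ?_⟩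
  · have : u = 0 := congrArg Subtype.val h0
    rw [this, map_zero]
  · intro p hp
    by_contra hcon
    push Not at hcon
    obtain ⟨hpb, hpt⟩ := hcon
    have key : ∀ P : Submodule A A, (∀ v ∈ P, (regular sA).σ v ∈ P) → P < U →
        ∀ v ∈ P, f v = 0 := by
      intro P hP hlt v hv
      by_contra hne
      exact hmin P ⟨hP, v, hv, hne⟩ hlt
    let P : Submodule A A := p.map U.subtype
    have hPU : P ≤ U := Submodule.map_subtype_le U p
    have hPinv : ∀ v ∈ P, (regular sA).σ v ∈ P := by
      rintro _ ⟨v, hv, rfl⟩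
      exact ⟨_, hp v hv, rfl⟩
    have hPlt : P < U := by
      refine lt_of_le_of_ne hPU fun he => hpt ?_
      rw [eq_top_iff]
      rintro ⟨v, hv⟩ _
      have hv' : v ∈ P := by rw [he]; exact hv
      obtain ⟨w, hw, hwv⟩ := hv'
      have : w = ⟨v, hv⟩ := Subtype.ext hwv
      rw [← this]; exact hw
    obtain ⟨q, hq, hpq⟩ := h A (regular sA) P hPinv
    have hQlt : q ⊓ U < U := by
      refine lt_of_le_of_ne inf_le_right fun he => hpb ?_
      rw [inf_eq_right] at he
      rw [eq_bot_iff]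
      intro v hv
      have h1 : (v : A) ∈ P ⊓ q := ⟨⟨v, hv, rfl⟩, he v.2⟩
      rw [hpq.inf_eq_bot] at h1
      exact Subtype.ext h1
    have h1 := key P hPinv hPlt
    have h2 := key (q ⊓ U) (fun v hv => ⟨hq v hv.1, hU v hv.2⟩) hQlt
    have hu' : u ∈ P ⊔ q := by rw [hpq.sup_eq_top]; trivial
    obtain ⟨x, hx, y, hy, hxy⟩ := Submodule.mem_sup.1 hu'
    have hyU : y ∈ U := by
      have : y = u - x := by rw [← hxy]; abel
      rw [this]; exact U.sub_mem huU (hPU hx)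
    apply hu
    rw [← hxy, map_add, h1 x hx, h2 y ⟨hy, hyU⟩, add_zero]
  · obtain ⟨ι, hι⟩ := IsSemisimpleModule.lifting_property (f ∘ₗ U.subtype)
      (LinearMap.surjective_of_ne_zero hr0) (LinearMap.id : W →ₗ[A] W)
    exact ⟨ι, f ∘ₗ U.subtype, fun w => LinearMap.congr_fun hι w⟩

/-- Structure of irreducible supermodules of type `Q` over a split superalgebra. -/
theorem typeQ [IsSemisimpleRing A] (hsp : SuperSplit sA) (sV : SuperMod sA V)
    (hV : IrreducibleSuperMod sA sV) (hns : ¬ IsSimpleModule A V) :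
    ∃ W : Submodule A V, IsSimpleModule A W ∧ IsCompl W (twist sV W) ∧
      ∀ f : Module.End A V, ∃ c d : K, (∀ w ∈ W, f w = c • w) ∧
        ∀ w ∈ twist sV W, f w = d • w := by
  obtain ⟨⟨v₀, hv₀⟩, hirr⟩ := hV
  have : Nontrivial V := ⟨⟨v₀, 0, hv₀⟩⟩
  obtain ⟨W, hW⟩ := IsSemisimpleModule.exists_simple_submodule A V
  have hWat := isSimpleModule_iff_isAtom.1 hW
  have hsup : W ⊔ twist sV W = ⊤ := by
    refine (hirr _ (sup_twist_inv sV W)).resolve_left fun h => hWat.1 ?_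
    exact le_bot_iff.1 (h ▸ le_sup_left)
  have hWtop : W ≠ ⊤ := fun he => hns (by
    subst he
    exact (Submodule.topEquiv (R := A) (M := V)).isSimpleModule_iff.1 hW)
  have hinf : W ⊓ twist sV W = ⊥ := by
    refine (hirr _ (inf_twist_inv sV W)).resolve_right fun h => hWtop ?_
    exact top_le_iff.1 (h ▸ inf_le_left)
  have hc : IsCompl W (twist sV W) := ⟨disjoint_iff.2 hinf, codisjoint_iff.2 hsup⟩
  refine ⟨W, hW, hc, ?_⟩
  obtain ⟨g, hg, hspan⟩ := (hsp V sV ⟨⟨v₀, hv₀⟩, hirr⟩).2 hns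
  let E : Module.End A V := Submodule.projection W (twist sV W) hc
  have hE1 : ∀ w ∈ W, E w = w := fun w hw => Submodule.projection_apply_left hc ⟨w, hw⟩
  have hE2 : ∀ w ∈ twist sV W, E w = 0 := fun w hw => 
    (Submodule.projection_apply_eq_zero_iff hc).2 hw
  obtain ⟨w₀, hw₀, hw₀0⟩ := W.ne_bot_iff.1 hWat.1
  have hσ0 : sV.σ w₀ ≠ 0 := fun h => hw₀0 (by simpa using h)
  obtain ⟨c₀, d₀, hE⟩ := hspan E
  have hd₀ : d₀ ≠ 0 := by
    rintro rfl
    have h1 := hE w₀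
    have h2 := hE (sV.σ w₀)
    rw [hE1 _ hw₀, zero_smul, add_zero] at h1
    rw [hE2 _ (sigma_mem_twist sV W hw₀), zero_smul, add_zero] at h2
    have h3 := (smul_eq_zero.1 h2.symm).resolve_right hσ0
    rw [h3, zero_smul] at h1
    exact hw₀0 h1
  have hgE : ∀ v, g v = d₀⁻¹ • (E v - c₀ • v) := fun v => by
    rw [hE v, add_sub_cancel_left, smul_smul, inv_mul_cancel₀ hd₀, one_smul]
  intro f
  obtain ⟨c, d, hf⟩ := hspan f
  refine ⟨c + d * (d₀⁻¹ * (1 - c₀)), c + d * (d₀⁻¹ * (- c₀)), fun w hw => ?_, fun w hw => ?_⟩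
  · rw [hf, hgE, hE1 w hw]; module
  · rw [hf, hgE, hE2 w hw]; module

end Basic
section Forward

variable {K : Type} [Field K] {A : Type} [Ring A] [Algebra K A] {sA : SuperAlg K A}
variable {V : Type} [AddCommGroup V] [Module K V] [Module A V] [IsScalarTower K A V]
variable {V' : Type} [AddCommGroup V'] [Module K V'] [Module A V'] [IsScalarTower K A V']

theorem ann_sigma (sV : SuperMod sA V) (a : A) (ha : a ∈ Module.annihilator A V) :
    sA.σ a ∈ Module.annihilator A V := by
  rw [Module.mem_annihilator] at *
  intro v
  have := sV.compat a (sV.σ v)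
  rw [ha, map_zero, sV.invol] at this
  exact this.symm

theorem ann_eq_of_hom (sV : SuperMod sA V) (hV : IrreducibleSuperMod sA sV)
    (sV' : SuperMod sA V') (hV' : IrreducibleSuperMod sA sV') (f : V →ₗ[A] V') (hf : f ≠ 0) :
    Module.annihilator A V = Module.annihilator A V' := by
  apply le_antisymm
  · intro a ha
    have ha' := ann_sigma sV a ha
    rw [Module.mem_annihilator] at *
    have htop : LinearMap.range f ⊔ twist sV' (LinearMap.range f) = ⊤ := by
      refine (hV'.2 _ (sup_twist_inv sV' _)).resolve_left fun h => hf ?_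
      rw [← LinearMap.range_eq_bot]
      exact le_bot_iff.1 (h ▸ le_sup_left)
    intro v
    have hv : v ∈ LinearMap.range f ⊔ twist sV' (LinearMap.range f) := by rw [htop]; trivial
    obtain ⟨x, ⟨u, rfl⟩, y, ⟨u', hu'⟩, rfl⟩ := Submodule.mem_sup.1 hv
    have hy : a • y = 0 := by
      have h1 : sV'.σ (a • y) = 0 := by
        rw [sV'.compat, ← hu', ← map_smul, ha', map_zero]
      simpa using h1
    rw [smul_add, hy, ← map_smul, ha, map_zero, add_zero]
  · intro a ha
    have ha' := ann_sigma sV' a ha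
    rw [Module.mem_annihilator] at *
    have hbot : LinearMap.ker f ⊓ twist sV (LinearMap.ker f) = ⊥ := by
      refine (hV.2 _ (inf_twist_inv sV _)).resolve_right fun h => hf ?_
      rw [← LinearMap.ker_eq_top]
      exact top_le_iff.1 (h ▸ inf_le_left)
    intro v
    have : a • v ∈ LinearMap.ker f ⊓ twist sV (LinearMap.ker f) := by
      refine ⟨?_, ?_⟩
      · change f (a • v) = 0
        rw [map_smul, ha]
      · change f (sV.σ (a • v)) = 0
        rw [sV.compat, map_smul, ha']
    rw [hbot] at this
    exact this

/-- Simultaneous density for a finite family of modules without nonzero mutual maps. -/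
theorem density [IsSemisimpleRing A] {ι : Type} [Fintype ι] (M : ι → Type)
    [∀ i, AddCommGroup (M i)] [∀ i, Module K (M i)] [∀ i, Module A (M i)]
    [∀ i, IsScalarTower K A (M i)] [∀ i, Module.Finite K (M i)]
    (hom0 : ∀ i j, i ≠ j → ∀ g : M i →ₗ[A] M j, g = 0)
    (f : ∀ i, M i →ₗ[K] M i)
    (hf : ∀ i (g : Module.End A (M i)) v, f i (g v) = g (f i v)) :
    ∃ a : A, ∀ i v, f i v = a • v := by
  classical
  have hg : ∀ (g : Module.End A (∀ i, M i)) (m : ∀ i, M i) (i : ι),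
      g m i = (LinearMap.proj i ∘ₗ g ∘ₗ LinearMap.single A M i) (m i) := by
    intro g m i
    conv_lhs => rw [← LinearMap.sum_single_apply M m]
    rw [map_sum, Finset.sum_apply, Finset.sum_eq_single i]
    · rfl
    · intro j _ hj
      have := hom0 j i hj (LinearMap.proj i ∘ₗ g ∘ₗ LinearMap.single A M j)
      exact LinearMap.congr_fun this (m j)
    · intro h; exact absurd (Finset.mem_univ i) h
  let F : Module.End (Module.End A (∀ i, M i)) (∀ i, M i) :=
    { toFun := fun m i => f i (m i)
      map_add' := by intro x y; ext i; simp
      map_smul' := by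
        intro g m
        ext i
        simp only [Module.End.smul_def, RingHom.id_apply]
        rw [hg g m i, hg g _ i, hf] }
  obtain ⟨s, hs⟩ := Module.Finite.fg_top (R := K) (M := ∀ i, M i)
  obtain ⟨a, ha⟩ := jacobson_density F s
  refine ⟨a, fun i v => ?_⟩
  let F' : (∀ i, M i) →ₗ[K] (∀ i, M i) := LinearMap.pi fun i => f i ∘ₗ LinearMap.proj i
  have : F' = Algebra.lsmul K K (∀ i, M i) a := by
    apply LinearMap.ext_on (s := (s : Set (∀ i, M i))) hs
    intro m hm
    exact ha m hm
  have h2 := congrFun (LinearMap.congr_fun this (Pi.single i v)) i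
  simpa [F'] using h2

theorem exists_homog_basis [CharZero K] [FiniteDimensional K V] (σ : V ≃ₗ[K] V)
    (hσ : ∀ v, σ (σ v) = v) :
    ∃ (m n : ℕ) (b : Module.Basis (Fin (m + n)) K V), ∀ a, σ (b a) = matEps K m a • b a := by
  have h2 : (2 : K) ≠ 0 := two_ne_zero
  let P : Submodule K V := LinearMap.ker ((σ : V →ₗ[K] V) - LinearMap.id)
  let N : Submodule K V := LinearMap.ker ((σ : V →ₗ[K] V) + LinearMap.id)
  have hP : ∀ v, v ∈ P ↔ σ v = v := fun v => by simp [P, sub_eq_zero]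
  have hN : ∀ v, v ∈ N ↔ σ v = -v := fun v => by simp [N, add_eq_zero_iff_eq_neg]
  have hPN : IsCompl P N := by
    constructor
    · rw [Submodule.disjoint_def]
      intro v h1 h3
      rw [hP] at h1
      rw [hN, h1] at h3
      have : (2 : K) • v = 0 := by rw [two_smul]; nth_rewrite 1 [h3]; simp
      exact (smul_eq_zero.1 this).resolve_left h2
    · rw [codisjoint_iff, eq_top_iff]
      intro v _
      refine Submodule.mem_sup.2 ⟨(2⁻¹ : K) • (v + σ v), ?_, (2⁻¹ : K) • (v - σ v), ?_, ?_⟩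
      · rw [hP, map_smul, map_add, hσ, add_comm]
      · rw [hN, map_smul, map_sub, hσ, ← smul_neg, neg_sub]
      · rw [← smul_add, add_add_sub_cancel, ← two_smul K, smul_smul, inv_mul_cancel₀ h2, one_smul]
  let b₀ := ((Module.finBasis K P).prod (Module.finBasis K N)).map
    (Submodule.prodEquivOfIsCompl P N hPN)
  refine ⟨_, _, b₀.reindex finSumFinEquiv, fun a => ?_⟩
  obtain ⟨c, rfl⟩ := finSumFinEquiv.surjective a
  rw [Module.Basis.reindex_apply, Equiv.symm_apply_apply]
  rcases c with c | c
  · have : b₀ (Sum.inl c) = (Module.finBasis K P c : V) := by simp [b₀]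
    rw [this, (hP _).1 (Module.finBasis K P c).2]
    simp [matEps]
  · have : b₀ (Sum.inr c) = (Module.finBasis K N c : V) := by simp [b₀]
    rw [this, (hN _).1 (Module.finBasis K N c).2]
    simp [matEps]

theorem pkgM [CharZero K] [FiniteDimensional K V] (hsp : SuperSplit sA) (sV : SuperMod sA V)
    (hV : IrreducibleSuperMod sA sV) (hs : IsSimpleModule A V) :
    ∃ (m n : ℕ), 0 < m + n ∧ ∃ ρ : A →ₐ[K] Matrix (Fin (m + n)) (Fin (m + n)) K,
      (∀ a, ρ (sA.σ a) = Matrix.of fun c d => (matEps K m c * matEps K m d) • ρ a c d) ∧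
      (∀ a, ρ a = 0 → ∀ v : V, a • v = 0) ∧
      ∀ X, ∃ f : V →ₗ[K] V, (∀ (g : Module.End A V) v, f (g v) = g (f v)) ∧
        ∀ a : A, (∀ v, f v = a • v) → ρ a = X := by
  obtain ⟨m, n, b, hb⟩ := exists_homog_basis sV.σ sV.invol
  refine ⟨m, n, ?_, ((LinearMap.toMatrixAlgEquiv b : _ →ₐ[K] _).comp (Algebra.lsmul K K V)),
    ?_, ?_, ?_⟩
  · obtain ⟨v, hv⟩ := hV.1
    have : Nontrivial V := ⟨⟨v, 0, hv⟩⟩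
    obtain ⟨i⟩ := b.index_nonempty
    exact lt_of_le_of_lt (Nat.zero_le _) i.2
  · intro a
    ext c d
    have heps : ∀ x : Fin (m + n), matEps K m x * matEps K m x = 1 := fun x => by
      unfold matEps; split_ifs <;> simp
    have hbσ : ∀ v, b.repr (sV.σ v) c = matEps K m c * b.repr v c := by
      intro v
      conv_lhs => rw [← b.sum_repr v]
      simp only [map_sum, map_smul, hb]
      simp only [Finsupp.coe_finsetSum, Finset.sum_apply, Finsupp.smul_apply, smul_eq_mul,
        Module.Basis.repr_self, Finsupp.single_apply]
      simp [mul_comm]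
    have h1 : sA.σ a • b d = matEps K m d • sV.σ (a • b d) := by
      rw [sV.compat, hb, smul_comm (sA.σ a), smul_smul, heps, one_smul]
    have hρ : ∀ x : A, (((LinearMap.toMatrixAlgEquiv b :
          (V →ₗ[K] V) →ₐ[K] Matrix (Fin (m + n)) (Fin (m + n)) K).comp
          (Algebra.lsmul K K V)) x : Matrix (Fin (m + n)) (Fin (m + n)) K) c d
        = b.repr (x • b d) c := fun x => LinearMap.toMatrixAlgEquiv_apply b _ c d
    rw [Matrix.of_apply, hρ, hρ]
    rw [h1, map_smul, Finsupp.smul_apply, hbσ, smul_eq_mul, smul_eq_mul]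
    ring
  · intro a ha v
    have : Algebra.lsmul K K V a = 0 := by
      apply (LinearMap.toMatrixAlgEquiv b).injective
      rw [map_zero]; exact ha
    exact LinearMap.congr_fun this v
  · intro X
    refine ⟨(LinearMap.toMatrixAlgEquiv b).symm X, ?_, ?_⟩
    · intro g v
      obtain ⟨c, hc⟩ := (hsp V sV hV).1 hs g
      rw [hc, hc, map_smul]
    · intro a ha
      have : Algebra.lsmul K K V a = (LinearMap.toMatrixAlgEquiv b).symm X := by
        ext v; exact (ha v).symm
      simp [this]

theorem pkgQ [FiniteDimensional K V] [IsSemisimpleRing A]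
    (hsp : SuperSplit sA) (sV : SuperMod sA V)
    (hV : IrreducibleSuperMod sA sV) (hs : ¬ IsSimpleModule A V) :
    ∃ (t : ℕ), 0 < t ∧ ∃ ρ : A →ₐ[K] Matrix (Fin t) (Fin t) K,
      (∀ a, ρ a = 0 → ρ (sA.σ a) = 0 → ∀ v : V, a • v = 0) ∧
      ∀ Y Z, ∃ f : V →ₗ[K] V, (∀ (g : Module.End A V) v, f (g v) = g (f v)) ∧
        ∀ a : A, (∀ v, f v = a • v) → ρ a = Y ∧ ρ (sA.σ a) = Z := by
  obtain ⟨W, hW, hc, hend⟩ := typeQ hsp sV hV hs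
  have hfin : FiniteDimensional K W := 
    Module.Finite.of_injective (W.subtype.restrictScalars K) W.subtype_injective
  have hnt := IsSimpleModule.nontrivial A W
  let b := Module.finBasis K W
  have hdec : ∀ v : V, ∃ w ∈ W, ∃ w' ∈ W, v = w + sV.σ w' := by
    intro v
    have hv : v ∈ W ⊔ twist sV W := by rw [hc.sup_eq_top]; trivial
    obtain ⟨x, hx, y, hy, rfl⟩ := Submodule.mem_sup.1 hv
    exact ⟨x, hx, sV.σ y, hy, by rw [sV.invol]⟩
  refine ⟨Module.finrank K W, Module.finrank_pos, 
    ((LinearMap.toMatrixAlgEquiv b : _ →ₐ[K] _).comp (Algebra.lsmul K K W)), ?_, ?_⟩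
  · intro a h1 h2 v
    have h1' : ∀ w ∈ W, a • w = 0 := by
      have : Algebra.lsmul K K W a = 0 := by
        apply (LinearMap.toMatrixAlgEquiv b).injective
        rw [map_zero]; exact h1
      intro w hw
      exact congrArg Subtype.val (LinearMap.congr_fun this ⟨w, hw⟩)
    have h2' : ∀ w ∈ W, sA.σ a • w = 0 := by
      have : Algebra.lsmul K K W (sA.σ a) = 0 := by
        apply (LinearMap.toMatrixAlgEquiv b).injective
        rw [map_zero]; exact h2
      intro w hw
      exact congrArg Subtype.val (LinearMap.congr_fun this ⟨w, hw⟩)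
    obtain ⟨w, hw, w', hw', rfl⟩ := hdec v
    have := sV.compat (sA.σ a) w'
    rw [sA.invol, h2' w' hw', map_zero] at this
    rw [smul_add, h1' w hw, ← this, add_zero]
  · intro Y Z
    let pr : V →ₗ[K] W := (Submodule.projectionOnto W (twist sV W) hc).restrictScalars K
    have hpr1 : ∀ w : W, pr w = w := fun w => Submodule.projectionOnto_apply_left hc w
    have hpr2 : ∀ w ∈ twist sV W, pr w = 0 := fun w hw =>
      (Submodule.projectionOnto_apply_eq_zero_iff hc).2 hw
    let inc : W →ₗ[K] V := W.subtype.restrictScalars K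
    let y := (LinearMap.toMatrixAlgEquiv b).symm Y
    let z := (LinearMap.toMatrixAlgEquiv b).symm Z
    let f : V →ₗ[K] V := inc ∘ₗ y ∘ₗ pr + sV.σ.toLinearMap ∘ₗ inc ∘ₗ z ∘ₗ pr ∘ₗ sV.σ.toLinearMap
    have hf1 : ∀ w : W, f w = y w := fun w => by
      have : pr (sV.σ w) = 0 := hpr2 _ (sigma_mem_twist sV W w.2)
      simp [f, this, hpr1, inc]
    have hf2 : ∀ w : W, f (sV.σ w) = sV.σ (z w) := fun w => by
      have : pr (sV.σ w) = 0 := hpr2 _ (sigma_mem_twist sV W w.2)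
      simp [f, this, hpr1, inc, sV.invol]
    refine ⟨f, ?_, ?_⟩
    · intro g v
      obtain ⟨c, d, h1, h2⟩ := hend g
      obtain ⟨w, hw, w', hw', rfl⟩ := hdec v
      have e1 := hf1 ⟨w, hw⟩
      have e2 := hf2 ⟨w', hw'⟩
      simp only at e1 e2
      rw [map_add, map_add, map_add, map_add, h1 w hw, h2 _ (sigma_mem_twist sV W hw'), map_smul,
        map_smul, e1, e2, h1 _ (y ⟨w, hw⟩).2, h2 _ (sigma_mem_twist sV W (z ⟨w', hw'⟩).2)]
    · intro a ha
      constructor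
      · have : Algebra.lsmul K K W a = y := by
          ext w
          rw [← hf1, ha]; rfl
        simp [this, y]
      · have : Algebra.lsmul K K W (sA.σ a) = z := by
          ext w
          apply sV.σ.injective
          rw [← hf2, ha]
          change sV.σ (sA.σ a • (w : V)) = _
          rw [sV.compat, sA.invol]
        simp [this, z]

end Forward
section Assembly

variable {K : Type} [Field K] {A : Type} [Ring A] [Algebra K A] {sA : SuperAlg K A}

theorem exists_family [FiniteDimensional K A] (h : SuperSemisimple sA) :
    ∃ (ι : Type) (_ : Fintype ι) (U : ι → Submodule A A)
      (hU : ∀ i, ∀ v ∈ U i, (regular sA).σ v ∈ U i),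
      (∀ i, IrreducibleSuperMod sA (superSub (regular sA) (U i) (hU i))) ∧
      (∀ i j, i ≠ j → ∀ g : U i →ₗ[A] U j, g = 0) ∧
      ∀ a : A, (∀ i, ∀ v : U i, a • v = 0) → a = 0 := by
  classical
  have hss := semisimpleRing_of_super h
  have : IsArtinianRing A := IsArtinianRing.of_finite K A
  let T : Set (Ideal A) := {I | ∃ (U : Submodule A A) (hU : ∀ v ∈ U, (regular sA).σ v ∈ U),
    IrreducibleSuperMod sA (superSub (regular sA) U hU) ∧ Module.annihilator A U = I}
  let S : Set (Ideal A) := {I | ∃ s : Finset (Ideal A), (∀ x ∈ s, x ∈ T) ∧ s.inf id = I}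
  have hS : S.Nonempty := ⟨_, ∅, by simp, rfl⟩
  obtain ⟨I, ⟨s, hsT, hsI⟩, hmin⟩ := WellFounded.has_min (wellFounded_lt (α := Ideal A)) S hS
  have hIle : ∀ t ∈ T, I ≤ t := by
    intro t ht
    have h1 : (insert t s).inf id ∈ S := ⟨insert t s, by
      intro x hx
      rcases Finset.mem_insert.1 hx with rfl | hx
      · exact ht
      · exact hsT x hx, rfl⟩
    have h2 := hmin _ h1
    rw [Finset.inf_insert, hsI, id] at h2
    by_contra hcon
    exact h2 (inf_lt_right.2 hcon)
  have hI : I = ⊥ := by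
    rw [eq_bot_iff, ← IsArtinianRing.isSemisimpleRing_iff_jacobson.1 hss,
      Ring.jacobson_eq_sInf_isMaximal]
    refine le_sInf fun M hM a ha => ?_
    have hMs : IsSimpleModule A (A ⧸ M) := isSimpleModule_iff_isCoatom.2 (Ideal.isMaximal_def.1 hM)
    obtain ⟨U, hU, hirr, j, r, hr⟩ := exists_summand h (A ⧸ M)
    have h1 := hIle _ ⟨U, hU, hirr, rfl⟩ ha
    rw [Module.mem_annihilator] at h1
    have h2 : a • (Submodule.Quotient.mk 1 : A ⧸ M) = 0 := by
      rw [← hr (Submodule.Quotient.mk 1), ← map_smul, h1, map_zero]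
    rw [← Submodule.Quotient.mk_smul, Submodule.Quotient.mk_eq_zero] at h2
    simpa using h2
  choose U hU hirr hann using fun x : s => hsT x.1 x.2
  refine ⟨s, inferInstance, U, hU, hirr, ?_, ?_⟩
  · intro i j hij g
    by_contra hg
    apply hij
    apply Subtype.ext
    rw [← hann i, ← hann j]
    exact ann_eq_of_hom _ (hirr i) _ (hirr j) g hg
  · intro a ha
    have : a ∈ s.inf id := by
      rw [Submodule.mem_finsetInf]
      intro x hx
      have h1 : a ∈ Module.annihilator A (U ⟨x, hx⟩) :=
        Module.mem_annihilator.2 (ha ⟨x, hx⟩)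
      rw [hann ⟨x, hx⟩] at h1
      exact h1
    rw [hsI, hI] at this
    exact this

theorem forward [CharZero K] [FiniteDimensional K A] (hsp : SuperSplit sA)
    (h : SuperSemisimple sA) :
    ∃ (k₁ k₂ : ℕ) (m n : Fin k₁ → ℕ) (t : Fin k₂ → ℕ),
      (∀ i, 0 < m i + n i) ∧ (∀ j, 0 < t j) ∧
      ∃ φ : A ≃ₐ[K] MsqAlg K k₁ k₂ m n t,
        ∀ a : A, φ (sA.σ a) = msqInvol K k₁ k₂ m n t (φ a) := by
  classical
  have hss := semisimpleRing_of_super h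
  obtain ⟨ι, _, U, hU, hirr, hom0, hker⟩ := exists_family h
  let e₁ := Fintype.equivFin {i : ι // IsSimpleModule A (U i)}
  let e₂ := Fintype.equivFin {i : ι // ¬ IsSimpleModule A (U i)}
  have hfin : ∀ i, FiniteDimensional K (U i) := fun i =>
    Module.Finite.of_injective ((U i).subtype.restrictScalars K) (U i).subtype_injective
  choose m n hmn ρ hρσ hρ0 hρs using fun i : Fin (Fintype.card {i : ι // IsSimpleModule A (U i)}) =>
    pkgM hsp _ (hirr (e₁.symm i).1) (e₁.symm i).2
  choose t ht τ hτ0 hτs using fun j : Fin (Fintype.card {i : ι // ¬ IsSimpleModule A (U i)}) =>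
    pkgQ hsp _ (hirr (e₂.symm j).1) (e₂.symm j).2
  refine ⟨_, _, m, n, t, hmn, ht, ?_⟩
  let Φ : A →ₐ[K] ((∀ i, Matrix (Fin (m i + n i)) (Fin (m i + n i)) K) ×
      (∀ j, Matrix (Fin (t j)) (Fin (t j)) K × Matrix (Fin (t j)) (Fin (t j)) K)) :=
    AlgHom.prod (AlgHom.pi ρ)
      (AlgHom.pi fun j => AlgHom.prod (τ j) ((τ j).comp (sA.σ : A →ₐ[K] A)))
  have hΦ : Function.Bijective Φ := by
    constructor
    · rw [injective_iff_map_eq_zero]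
      intro a ha
      apply hker
      intro i
      by_cases hi : IsSimpleModule A (U i)
      · have h1 := congrFun (congrArg Prod.fst ha) (e₁ ⟨i, hi⟩)
        have h2 := hρ0 (e₁ ⟨i, hi⟩) a h1
        rw [Equiv.symm_apply_apply] at h2
        exact h2
      · have h1 := congrFun (congrArg Prod.snd ha) (e₂ ⟨i, hi⟩)
        have h2 := hτ0 (e₂ ⟨i, hi⟩) a (congrArg Prod.fst h1) (congrArg Prod.snd h1)
        rw [Equiv.symm_apply_apply] at h2
        exact h2
    · rintro ⟨X, Y⟩
      choose f hfc hf using fun i => hρs i (X i)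
      choose g hgc hg using fun j => hτs j (Y j).1 (Y j).2
      let ν : Fin (Fintype.card {i : ι // IsSimpleModule A (U i)}) ⊕
          Fin (Fintype.card {i : ι // ¬ IsSimpleModule A (U i)}) → ι :=
        Sum.elim (fun i => (e₁.symm i).1) (fun j => (e₂.symm j).1)
      have hν : Function.Injective ν := by
        rintro (i | i) (j | j) hij
        · exact congrArg Sum.inl (e₁.symm.injective (Subtype.ext hij))
        · have hij' : (e₁.symm i).1 = (e₂.symm j).1 := hij
          have h1 := (e₁.symm i).2
          rw [hij'] at h1
          exact absurd h1 (e₂.symm j).2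
        · have hij' : (e₂.symm i).1 = (e₁.symm j).1 := hij
          have h1 := (e₁.symm j).2
          rw [← hij'] at h1
          exact absurd h1 (e₂.symm i).2
        · exact congrArg Sum.inr (e₂.symm.injective (Subtype.ext hij))
      obtain ⟨a, ha⟩ := density (K := K) (A := A) (fun s => U (ν s))
        (fun s s' hs q => hom0 _ _ (hν.ne hs) q)
        (fun s => match s with
          | Sum.inl i => f i
          | Sum.inr j => g j)
        (fun s => match s with
          | Sum.inl i => hfc i
          | Sum.inr j => hgc j)
      refine ⟨a, Prod.ext (funext fun i => hf i a (ha (Sum.inl i)))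
        (funext fun j => ?_)⟩
      have := hg j a (ha (Sum.inr j))
      exact Prod.ext this.1 this.2
  refine ⟨(AlgEquiv.ofBijective Φ hΦ : A ≃ₐ[K] _), fun a => ?_⟩
  refine Prod.ext (funext fun i => hρσ i a) (funext fun j => Prod.ext rfl ?_)
  change τ j (sA.σ (sA.σ a)) = τ j a
  rw [sA.invol]

end Assembly
section Backward

/-- Elementwise data witnessing the decomposition into matrix and queer factors. -/
def Good (K : Type) [Field K] (A : Type) [Ring A] [Algebra K A] (τ : A → A) : Prop :=
  τ 0 = 0 ∧ ∃ (κ : Type) (_ : Fintype κ) (p : κ → A), ∑ k, p k = 1 ∧ ∀ k,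
    (∀ x, ∃ c : K, p k * x * p k = c • p k) ∧ p k * p k = p k ∧
    ((∃ d e, (∀ x, e * x = x * e) ∧ τ e = e ∧ e * p k = p k ∧ d * d = e ∧ τ d = d ∧
        ∀ x, d * x = τ x * d) ∨
      (∃ e, (∀ x, e * x = x * e) ∧ e * p k = p k ∧ e * τ e = 0))

theorem good_transport {K : Type} [Field K] {A B : Type} [Ring A] [Algebra K A] [Ring B]
    [Algebra K B] (τ : A → A) (τ' : B → B) (φ : A ≃ₐ[K] B) (hφ : ∀ a, φ (τ a) = τ' (φ a))
    (h : Good K B τ') : Good K A τ := by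
  have hφ' : ∀ b, τ (φ.symm b) = φ.symm (τ' b) := fun b => by
    apply φ.injective; rw [hφ]; simp
  obtain ⟨h0, κ, _, p, hsum, h⟩ := h
  refine ⟨?_, κ, inferInstance, fun k => φ.symm (p k), ?_, fun k => ?_⟩
  · apply φ.injective; rw [hφ, map_zero, h0]
  · rw [← map_sum, hsum, map_one]
  · obtain ⟨h1, h2, h3⟩ := h k
    refine ⟨fun x => ?_, by rw [← map_mul, h2], ?_⟩
    · obtain ⟨c, hc⟩ := h1 (φ x)
      refine ⟨c, φ.injective ?_⟩
      simpa using hc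
    · rcases h3 with ⟨d, e, a1, a2, a3, a4, a5, a6⟩ | ⟨e, a1, a2, a3⟩
      · refine Or.inl ⟨φ.symm d, φ.symm e, fun x => φ.injective ?_, ?_, ?_, ?_, ?_,
          fun x => φ.injective ?_⟩
        · simpa using a1 (φ x)
        · rw [hφ', a2]
        · rw [← map_mul, a3]
        · rw [← map_mul, a4]
        · rw [hφ', a5]
        · simpa [hφ] using a6 (φ x)
      · refine Or.inr ⟨φ.symm e, fun x => φ.injective ?_, ?_, ?_⟩
        · simpa using a1 (φ x)
        · rw [← map_mul, a2]
        · rw [hφ', ← map_mul, a3, map_zero]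

theorem good_pi {K : Type} [Field K] {ι : Type} [Fintype ι] [DecidableEq ι] (B : ι → Type)
    [∀ i, Ring (B i)] [∀ i, Algebra K (B i)] (τ : ∀ i, B i → B i) (h : ∀ i, Good K (B i) (τ i)) :
    Good K (∀ i, B i) (fun x i => τ i (x i)) := by
  choose h0 κ hκ p hsum h using h
  have hm1 : ∀ i (a : B i) (x : ∀ i, B i), Pi.single i a * x = Pi.single i (a * x i) := by
    intro i a x; ext j
    by_cases hj : j = i
    · subst hj; simp
    · simp [hj]
  have hm2 : ∀ i (a : B i) (x : ∀ i, B i), x * Pi.single i a = Pi.single i (x i * a) := by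
    intro i a x; ext j
    by_cases hj : j = i
    · subst hj; simp
    · simp [hj]
  have hτ : ∀ i (a : B i), (fun j => τ j ((Pi.single i a : ∀ i, B i) j)) = Pi.single i (τ i a) := by
    intro i a; ext j
    by_cases hj : j = i
    · subst hj; simp
    · simp [hj, h0]
  refine ⟨funext fun i => h0 i, Σ i, κ i, inferInstance, fun s => Pi.single s.1 (p s.1 s.2), ?_, ?_⟩
  · rw [Fintype.sum_sigma]
    simp only
    have : ∀ i, ∑ k, (Pi.single i (p i k) : ∀ i, B i) = Pi.single i 1 := fun i => by
      rw [← hsum i]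
      exact (map_sum (AddMonoidHom.single B i) (p i) Finset.univ).symm
    simp only [this]
    exact Finset.univ_sum_single (1 : ∀ i, B i)
  · rintro ⟨i, k⟩
    obtain ⟨h1, h2, h3⟩ := h i k
    refine ⟨fun x => ?_, ?_, ?_⟩
    · obtain ⟨c, hc⟩ := h1 (x i)
      refine ⟨c, ?_⟩
      simp only [hm1, Pi.single_eq_same, hc, Pi.single_smul]
    · simp only [hm1, Pi.single_eq_same, h2]
    · rcases h3 with ⟨d, e, a1, a2, a3, a4, a5, a6⟩ | ⟨e, a1, a2, a3⟩
      · refine Or.inl ⟨Pi.single i d, Pi.single i e, fun x => ?_, ?_, ?_, ?_, ?_, fun x => ?_⟩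
        · rw [hm1, hm2, a1]
        · exact (hτ i e).trans (by rw [a2])
        · simp only [hm1, Pi.single_eq_same, a3]
        · simp only [hm1, Pi.single_eq_same, a4]
        · exact (hτ i d).trans (by rw [a5])
        · rw [hm1, hm2, a6]
      · refine Or.inr ⟨Pi.single i e, fun x => ?_, ?_, ?_⟩
        · rw [hm1, hm2, a1]
        · simp only [hm1, Pi.single_eq_same, a2]
        · simp only [hm1, Pi.single_eq_same, a3, Pi.single_zero]

theorem good_prod {K : Type} [Field K] {B C : Type} [Ring B] [Algebra K B] [Ring C] [Algebra K C]
    (τ : B → B) (τ' : C → C) (h : Good K B τ) (h' : Good K C τ') :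
    Good K (B × C) (fun x => (τ x.1, τ' x.2)) := by
  obtain ⟨h0, κ, _, p, hsum, h⟩ := h
  obtain ⟨h0', κ', _, p', hsum', h'⟩ := h'
  refine ⟨Prod.ext h0 h0', κ ⊕ κ', inferInstance,
    Sum.elim (fun k => (p k, 0)) (fun k => (0, p' k)), ?_, ?_⟩
  · rw [Fintype.sum_sum_type]
    ext <;> simp [Prod.fst_sum, Prod.snd_sum, hsum, hsum']
  · rintro (k | k)
    · obtain ⟨h1, h2, h3⟩ := h k
      refine ⟨fun x => ?_, ?_, ?_⟩
      · obtain ⟨c, hc⟩ := h1 x.1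
        exact ⟨c, by ext <;> simp [hc]⟩
      · ext <;> simp [h2]
      · rcases h3 with ⟨d, e, a1, a2, a3, a4, a5, a6⟩ | ⟨e, a1, a2, a3⟩
        · refine Or.inl ⟨(d, 0), (e, 0), fun x => ?_, ?_, ?_, ?_, ?_, fun x => ?_⟩
          · ext <;> simp [a1]
          · ext <;> simp [a2, h0']
          · ext <;> simp [a3]
          · ext <;> simp [a4]
          · ext <;> simp [a5, h0']
          · ext <;> simp [a6]
        · refine Or.inr ⟨(e, 0), fun x => ?_, ?_, ?_⟩
          · ext <;> simp [a1]
          · ext <;> simp [a2]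
          · ext <;> simp [a3]
    · obtain ⟨h1, h2, h3⟩ := h' k
      refine ⟨fun x => ?_, ?_, ?_⟩
      · obtain ⟨c, hc⟩ := h1 x.2
        exact ⟨c, by ext <;> simp [hc]⟩
      · ext <;> simp [h2]
      · rcases h3 with ⟨d, e, a1, a2, a3, a4, a5, a6⟩ | ⟨e, a1, a2, a3⟩
        · refine Or.inl ⟨(0, d), (0, e), fun x => ?_, ?_, ?_, ?_, ?_, fun x => ?_⟩
          · ext <;> simp [a1]
          · ext <;> simp [a2, h0]
          · ext <;> simp [a3]
          · ext <;> simp [a4]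
          · ext <;> simp [a5, h0]
          · ext <;> simp [a6]
        · refine Or.inr ⟨(0, e), fun x => ?_, ?_, ?_⟩
          · ext <;> simp [a1]
          · ext <;> simp [a2]
          · ext <;> simp [a3]

theorem sum_diag_single {K : Type} [Field K] (N : ℕ) :
    ∑ k : Fin N, Matrix.single k k (1 : K) = 1 := by
  ext a b
  rw [Matrix.sum_apply]
  by_cases h : a = b
  · subst h; simp [Matrix.single_apply]
  · rw [Matrix.one_apply_ne h]
    refine Finset.sum_eq_zero fun k _ => ?_
    rw [Matrix.single_apply, if_neg]
    rintro ⟨rfl, rfl⟩; exact h rfl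

theorem single_mul_mul_single {K : Type} [Field K] {N : ℕ} (k : Fin N)
    (x : Matrix (Fin N) (Fin N) K) :
    Matrix.single k k (1 : K) * x * Matrix.single k k 1 = x k k • Matrix.single k k (1 : K) := by
  rw [Matrix.single_mul_mul_single]; simp

theorem good_matrix (K : Type) [Field K] (m N : ℕ) :
    Good K (Matrix (Fin N) (Fin N) K)
      (fun x => Matrix.of fun a b => (matEps K m a * matEps K m b) • x a b) := by
  have heps : ∀ x : Fin N, matEps K m x * matEps K m x = 1 := fun x => by
    unfold matEps; split_ifs <;> simp
  refine ⟨by ext; simp, Fin N, inferInstance, fun k => Matrix.single k k 1, sum_diag_single N, ?_⟩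
  intro k
  refine ⟨fun x => ⟨x k k, single_mul_mul_single k x⟩, by simp, Or.inl
    ⟨Matrix.diagonal fun a => matEps K m a, 1, by simp, ?_, by simp, ?_, ?_, ?_⟩⟩
  · ext a b
    by_cases h : a = b
    · subst h; simp [heps]
    · simp [h]
  · rw [Matrix.diagonal_mul_diagonal]; simp [heps]
  · ext a b
    by_cases h : a = b
    · subst h; simp [heps]
    · simp [h]
  · intro x
    ext a b
    rw [Matrix.diagonal_mul, Matrix.mul_diagonal]
    simp only [Matrix.of_apply, smul_eq_mul]
    linear_combination (- matEps K m a * x a b) * heps b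

theorem good_queer (K : Type) [Field K] (t : ℕ) :
    Good K (Matrix (Fin t) (Fin t) K × Matrix (Fin t) (Fin t) K) (fun x => (x.2, x.1)) := by
  refine ⟨rfl, Fin t ⊕ Fin t, inferInstance,
    Sum.elim (fun k => (Matrix.single k k 1, 0)) (fun k => (0, Matrix.single k k 1)), ?_, ?_⟩
  · rw [Fintype.sum_sum_type]
    refine Prod.ext ?_ ?_ <;> simp [Prod.fst_sum, Prod.snd_sum, sum_diag_single]
  · rintro (k | k)
    · refine ⟨fun x => ⟨x.1 k k, ?_⟩, ?_, Or.inr ⟨(1, 0), fun x => ?_, ?_, ?_⟩⟩ <;>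
        refine Prod.ext ?_ ?_ <;> simp
    · refine ⟨fun x => ⟨x.2 k k, ?_⟩, ?_, Or.inr ⟨(0, 1), fun x => ?_, ?_, ?_⟩⟩ <;>
        refine Prod.ext ?_ ?_ <;> simp

theorem good_msq (K : Type) [Field K] (k₁ k₂ : ℕ) (m n : Fin k₁ → ℕ) (t : Fin k₂ → ℕ) :
    Good K (MsqAlg K k₁ k₂ m n t) (msqInvol K k₁ k₂ m n t) :=
  good_prod _ _ (good_pi _ _ fun i => good_matrix K (m i) (m i + n i))
    (good_pi _ _ fun j => good_queer K (t j))

variable {K : Type} [Field K] {A : Type} [Ring A] [Algebra K A] {sA : SuperAlg K A}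

theorem split_of_good (h : Good K A sA.σ) : SuperSplit sA := by
  obtain ⟨-, κ, _, p, hsum, h⟩ := h
  intro V _ _ _ _ sV hV
  obtain ⟨v₀, hv₀⟩ := hV.1
  have hex : ∃ k, p k • v₀ ≠ 0 := by
    by_contra hcon
    push Not at hcon
    apply hv₀
    rw [← one_smul A v₀, ← hsum, Finset.sum_smul]
    exact Finset.sum_eq_zero fun k _ => hcon k
  obtain ⟨k, hk⟩ := hex
  obtain ⟨h1, h2, h3⟩ := h k
  set w := p k • v₀ with hw
  have hpw : p k • w = w := by rw [hw, smul_smul, h2]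
  have hσw : sV.σ w ≠ 0 := fun h => hk (by simpa using h)
  have hσs : ∀ (a : A) (v : V), a • sV.σ v = sV.σ (sA.σ a • v) := fun a v => by
    rw [sV.compat, sA.invol]
  -- on `p w` an element acts by scalars
  have hpx : ∀ x : A, ∃ c : K, p k • x • w = c • w := fun x => by
    obtain ⟨c, hc⟩ := h1 x
    refine ⟨c, ?_⟩
    rw [← hpw, smul_smul x, smul_smul, ← mul_assoc, hc, smul_assoc]
  rcases h3 with ⟨d, e, a1, a2, a3, a4, a5, a6⟩ | ⟨e, a1, a2, a3⟩
  · have he : ∀ v : V, e • v = v := by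
      let E : Submodule A V :=
        { carrier := {v | e • v = v}
          add_mem' := by
            intro a b (ha : _ = _) (hb : _ = _)
            change _ = _
            rw [smul_add, ha, hb]
          zero_mem' := smul_zero e
          smul_mem' := by
            intro c x (hx : _ = _)
            change _ = _
            rw [smul_smul, a1, mul_smul, hx] }
      have hE : E = ⊤ := by
        refine (hV.2 E ?_).resolve_left fun hb => hk ?_
        · intro v (hv : _ = _)
          change _ = _
          rw [hσs, a2, hv]
        · have : w ∈ E := by
            change e • w = w
            rw [← hpw, smul_smul, a3]
          rw [hb] at this
          exact this
      intro v
      have : v ∈ E := by rw [hE]; trivial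
      exact this
    let θ : Module.End A V :=
      { toFun := fun v => d • sV.σ v
        map_add' := by intro x y; simp
        map_smul' := by
          intro a x
          simp only [RingHom.id_apply]
          rw [sV.compat, smul_smul, a6, sA.invol, mul_smul] }
    have hθ : ∀ v, θ v = d • sV.σ v := fun v => rfl
    have hdd : ∀ v : V, d • d • v = v := fun v => by rw [smul_smul, a4, he]
    have hθθ : ∀ v, θ (θ v) = v := fun v => by
      rw [hθ, hθ, sV.compat, a5, sV.invol, hdd]
    have hθσ : ∀ v, θ (sV.σ v) = sV.σ (θ v) := fun v => by
      rw [hθ, hθ, sV.compat, a5]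
    have hinv : ∀ (P : Submodule A V), ∀ v ∈ P, sV.σ v ∈ P := by
      intro P v hv
      rcases hV.2 (LinearMap.ker (θ - 1)) (by
        intro v hv
        simp only [LinearMap.mem_ker, LinearMap.sub_apply, Module.End.one_apply, sub_eq_zero]
          at hv ⊢
        rw [hθσ, hv]) with hb | ht
      · have : v + θ v ∈ LinearMap.ker (θ - 1) := by
          simp only [LinearMap.mem_ker, LinearMap.sub_apply, Module.End.one_apply, sub_eq_zero]
          rw [map_add, hθθ, add_comm]
        rw [hb, Submodule.mem_bot, add_eq_zero_iff_neg_eq, hθ] at this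
        rw [← hdd (sV.σ v), ← this]
        exact P.smul_mem _ (P.neg_mem hv)
      · have : v ∈ LinearMap.ker (θ - 1) := by rw [ht]; trivial
        simp only [LinearMap.mem_ker, LinearMap.sub_apply, Module.End.one_apply, sub_eq_zero]
          at this
        rw [hθ] at this
        rw [← hdd (sV.σ v), this]
        exact P.smul_mem _ hv
    have hnt : Nontrivial V := ⟨⟨v₀, 0, hv₀⟩⟩
    have hsimple : IsSimpleModule A V :=
      (isSimpleModule_iff A V).2 ⟨fun P => hV.2 P (hinv P)⟩
    refine ⟨fun _ f => ?_, fun hns => absurd hsimple hns⟩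
    have hgen := IsSimpleModule.toSpanSingleton_surjective A hk
    obtain ⟨x, hx⟩ := hgen (f w)
    rw [LinearMap.toSpanSingleton_apply] at hx
    obtain ⟨c, hc⟩ := hpx x
    have hfw : f w = c • w := by
      rw [← hc, hx, ← map_smul, hpw]
    refine ⟨c, fun v => ?_⟩
    obtain ⟨y, rfl⟩ := hgen v
    rw [LinearMap.toSpanSingleton_apply, map_smul, hfw, smul_comm]
  · have hew : e • w = w := by rw [← hpw, smul_smul, a2]
    have a3' : sA.σ e * e = 0 := by rw [← a1]; exact a3
    have hσew : sA.σ e • w = 0 := by rw [← hew, smul_smul, a3', zero_smul]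
    have heσ : e • sV.σ w = 0 := by rw [hσs, hσew, map_zero]
    have hcen : ∀ x, sA.σ e * x = x * sA.σ e := fun x => by
      have := congrArg sA.σ (a1 (sA.σ x))
      simpa [sA.invol] using this
    let g : Module.End A V :=
      { toFun := fun v => e • v
        map_add' := by intro x y; simp
        map_smul' := by
          intro a x
          simp only [RingHom.id_apply]
          rw [smul_smul, a1, mul_smul] }
    have hg : ∀ v, g v = e • v := fun v => rfl
    have hgs : ¬ ∃ c : K, ∀ v, g v = c • v := by
      rintro ⟨c, hc⟩
      have e1 := hc w
      have e2 := hc (sV.σ w)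
      rw [hg, hew] at e1
      rw [hg, heσ] at e2
      have hc0 := (smul_eq_zero.1 e2.symm).resolve_right hσw
      rw [hc0, zero_smul] at e1
      exact hk e1
    have hpσ : ∀ z : A, p k • z • sV.σ w = 0 := fun z => by
      have : p k • z • sV.σ w = p k • z • e • sV.σ w := by
        rw [smul_smul z e, ← a1, mul_smul, smul_smul (p k) e, ← a1, a2]
      rw [this, heσ, smul_zero, smul_zero]
    have hgen : ∀ v : V, ∃ x y : A, v = x • w + y • sV.σ w := by
      intro v
      let W : Submodule A V := Submodule.span A {w}
      have hwW : w ∈ W := Submodule.mem_span_singleton_self w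
      have htop : W ⊔ twist sV W = ⊤ := by
        refine (hV.2 _ (sup_twist_inv sV W)).resolve_left fun hb => hk ?_
        have : w ∈ W ⊔ twist sV W := Submodule.mem_sup_left hwW
        rw [hb] at this
        exact this
      have hv : v ∈ W ⊔ twist sV W := by rw [htop]; trivial
      obtain ⟨x, hx, y, hy, rfl⟩ := Submodule.mem_sup.1 hv
      obtain ⟨x', rfl⟩ := Submodule.mem_span_singleton.1 hx
      obtain ⟨y', hy'⟩ := Submodule.mem_span_singleton.1 hy
      refine ⟨x', sA.σ y', ?_⟩
      rw [← sV.compat, hy', sV.invol]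
    have hfw : ∀ f : Module.End A V, ∃ c : K, f w = c • w := by
      intro f
      obtain ⟨x, y, hxy⟩ := hgen (f w)
      obtain ⟨c, hc⟩ := hpx x
      refine ⟨c, ?_⟩
      rw [← hpw, map_smul, hxy, smul_add, hpσ, hc, add_zero, hpw]
    refine ⟨fun hs => ?_, fun _ => ⟨g, hgs, fun f => ?_⟩⟩
    · exfalso
      rcases LinearMap.bijective_or_eq_zero g with hb | h0
      · apply hσw
        apply hb.1
        rw [hg, heσ, map_zero]
      · apply hk
        rw [← hew, ← hg, h0, LinearMap.zero_apply]
    · obtain ⟨c, hc⟩ := hfw f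
      obtain ⟨d, hd⟩ := hfw (conj sV f)
      have hd' : f (sV.σ w) = d • sV.σ w := by
        rw [← map_smul, ← hd, conj_apply, sV.invol]
      refine ⟨d, c - d, fun v => ?_⟩
      obtain ⟨x, y, rfl⟩ := hgen v
      have hgv : g (x • w + y • sV.σ w) = x • w := by
        rw [map_add, map_smul g x w, map_smul g y (sV.σ w), hg, hg, hew, heσ, smul_zero, add_zero]
      rw [hgv, map_add, map_smul f x w, map_smul f y (sV.σ w), hc, hd', smul_comm x, smul_comm y]
      generalize x • w = X
      generalize y • sV.σ w = Y
      rw [smul_add, sub_smul]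
      abel

end Backward

end SuperProof

/-- A `K`-superalgebra `A` over a field of characteristic `0` is split
semisimple if and only if it is isomorphic as a superalgebra to a finite direct sum of
superalgebras of the form `M_{m|n}(K)` (with `m + n > 0`) or `Q_t(K)` (with `t > 0`).
Moreover, in this case every irreducible `|A|`-module is a direct summand of an irreducible
`A`-supermodule considered as an `|A|`-module. -/
theorem superSplit_semisimple_iff_matrix_queer
    (K : Type) [Field K] [CharZero K]
    (A : Type) [Ring A] [Algebra K A] [FiniteDimensional K A] (sA : SuperAlg K A) :
    ((SuperSplit sA ∧ SuperSemisimple sA) ↔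
      ∃ (k₁ k₂ : ℕ) (m n : Fin k₁ → ℕ) (t : Fin k₂ → ℕ),
        (∀ i, 0 < m i + n i) ∧ (∀ j, 0 < t j) ∧
        ∃ φ : A ≃ₐ[K] MsqAlg K k₁ k₂ m n t,
          ∀ a : A, φ (sA.σ a) = msqInvol K k₁ k₂ m n t (φ a)) ∧
    (SuperSplit sA ∧ SuperSemisimple sA →
      ∀ (W : Type) [AddCommGroup W] [Module K W] [Module A W] [IsScalarTower K A W],
        IsSimpleModule A W →
        ∃ (V : Type) (_ : AddCommGroup V) (_ : Module K V) (_ : Module A V)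
          (_ : IsScalarTower K A V) (sV : SuperMod sA V),
          IrreducibleSuperMod sA sV ∧
          ∃ (ι : W →ₗ[A] V) (r : V →ₗ[A] W), ∀ w, r (ι w) = w) := by
  refine ⟨⟨fun h => SuperProof.forward h.1 h.2, ?_⟩, ?_⟩
  · rintro ⟨k₁, k₂, m, n, t, -, -, φ, hφ⟩
    have hss : IsSemisimpleRing (MsqAlg K k₁ k₂ m n t) :=
      inferInstanceAs (IsSemisimpleRing
        ((∀ i : Fin k₁, Matrix (Fin (m i + n i)) (Fin (m i + n i)) K) ×
        (∀ j : Fin k₂, Matrix (Fin (t j)) (Fin (t j)) K × Matrix (Fin (t j)) (Fin (t j)) K)))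
    have hA : IsSemisimpleRing A := φ.symm.toRingEquiv.isSemisimpleRing
    exact ⟨SuperProof.split_of_good (SuperProof.good_transport _ _ φ hφ
      (SuperProof.good_msq K k₁ k₂ m n t)), SuperProof.super_of_semisimpleRing sA⟩
  · rintro ⟨-, h⟩ W _ _ _ _ hW
    obtain ⟨U, hU, hirr, j, r, hr⟩ := SuperProof.exists_summand h W
    exact ⟨U, inferInstance, inferInstance, inferInstance, inferInstance, _, hirr, j, r, hr⟩
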